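/- For all integers k ≥ 0 and all integers n ≥ 0, d_{7k+5}(7n + 2) ≡ 0 (mod 7). -/

import Mathlib

noncomputable section

/-- `J b = ∏_{k=1}^∞ (1 - q^{b·k})` as a formal power series with integer coefficients. -/
def J (b : ℕ) : PowerSeries ℤ :=
  PowerSeries.mk fun n =>
    PowerSeries.coeff n
      (∏ k ∈ Finset.range (n + 1), (1 - (PowerSeries.X : PowerSeries ℤ) ^ (b * (k + 1))))

/-!
Write `J_b = J b`. The series `F = ∑_k (1 - 6k) q^{k(3k-1)/2}`, over all integers `k`, satisfies
`J_1^5 = J_2^2 F`. Hence if `p ∣ m + 2`, the generating function `J_2^m / J_1^{3m+1}` is a `p`-th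
power times `F`, and a `p`-th power is, modulo `p`, a series in `q^p`. An exponent
`N = k(3k-1)/2` satisfies `24N + 1 = (6k - 1)^2`, so for a prime `p ∣ 24N + 1` every coefficient of
`F` at an index congruent to `N` modulo `p` is divisible by `p`.

To prove the identity, let `T = ∑_j q^{j(j-1)/2}` and `U = ∑_j (-1)^j (2j - 1) q^{j(j-1)/2}`. The
finite Jacobi triple product at `z = -1`, and its derivative at `z = 1`, give in the limit
`T J_1 = 2 J_2^2` and `U J_1 = -2 J_1^4`. By Euler's pentagonal number theorem `F T + J_1 U` is a
double series over `(k, j)`. The symmetry `j ↦ 1 - j` reduces it to the terms with `j = 2m - k`, and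
these cancel in pairs under `k ↦ m - k`. So `F T = 2 J_1^4`, and multiplying by `J_1` yields the
identity.
-/

section TriangularNumber

/-- The triangular number `k (k - 1) / 2`, indexed by all integers `k` so that
`triangular k = triangular (1 - k)`; the analogue of `pentagonal`. -/
def triangular (k : ℤ) : ℕ := (k * (k - 1) / 2).toNat

theorem two_mul_natCast_triangular (k : ℤ) : 2 * (triangular k : ℤ) = k * (k - 1) := by
  have h_even : 2 * (k * (k - 1) / 2) = k * (k - 1) :=
    Int.two_mul_ediv_two_of_even (Int.even_mul_pred_self k)
  have h_nonneg : 0 ≤ k * (k - 1) := by nlinarith [Int.le_self_sq k]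
  rw [triangular, Int.toNat_of_nonneg (by lia), h_even]

theorem triangular_zero : triangular 0 = 0 := rfl

theorem natCast_triangular_add_one (k : ℤ) : (triangular (k + 1) : ℤ) = triangular k + k := by
  linarith [two_mul_natCast_triangular k, two_mul_natCast_triangular (k + 1)]

theorem triangular_natCast_succ_sub_add (k m : ℕ) :
    triangular (↑(k + 1) - m) + m = triangular (k - m) + k := by
  have h := natCast_triangular_add_one (k - m)
  zify
  rw [add_sub_right_comm, h]
  ring

theorem triangular_one_sub (k : ℤ) : triangular (1 - k) = triangular k := by
  zify
  linarith [two_mul_natCast_triangular k, two_mul_natCast_triangular (1 - k)]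

open Filter in
theorem tendsto_triangular_cofinite : Tendsto triangular cofinite atTop := by
  rw [← Nat.cofinite_eq_atTop]
  refine .cofinite_of_finite_preimage_singleton fun n ↦
    (Set.finite_Icc (-n : ℤ) (2 * n + 1)).subset fun k (hk : triangular k = n) ↦ ?_
  have h := two_mul_natCast_triangular k
  rw [hk] at h
  constructor <;> nlinarith

open Filter in
theorem tendsto_pentagonal_cofinite : Tendsto pentagonal cofinite atTop :=
  Nat.cofinite_eq_atTop ▸ pentagonal_injective.tendsto_cofinite

end TriangularNumber

section GaussianBinomial

variable {R : Type*} [CommRing R] (q : R)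

/-- The finite `q`-Pochhammer symbol `(q; q)_n = ∏_{i=1}^n (1 - q^i)`. -/
def qPochhammer (n : ℕ) : R := ∏ i ∈ Finset.range n, (1 - q ^ (i + 1))

theorem qPochhammer_succ (n : ℕ) :
    qPochhammer q (n + 1) = qPochhammer q n * (1 - q ^ (n + 1)) :=
  Finset.prod_range_succ ..

/-- The Gaussian binomial coefficient, defined by the `q`-Pascal rule; like `Nat.choose`, it
vanishes for `n < k`. -/
def gaussBinom : ℕ → ℕ → R
  | _, 0 => 1
  | 0, _ + 1 => 0
  | n + 1, k + 1 => q ^ (k + 1) * gaussBinom n (k + 1) + gaussBinom n k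

theorem gaussBinom_zero_right (n : ℕ) : gaussBinom q n 0 = 1 := by cases n <;> rfl

theorem gaussBinom_succ_succ (n k : ℕ) :
    gaussBinom q (n + 1) (k + 1) = q ^ (k + 1) * gaussBinom q n (k + 1) + gaussBinom q n k := rfl

theorem gaussBinom_eq_zero_of_lt {n k : ℕ} (h : n < k) : gaussBinom q n k = 0 := by
  induction n generalizing k with
  | zero => cases k with
    | zero => lia
    | succ k => rfl
  | succ n ih => cases k with
    | zero => lia
    | succ k => rw [gaussBinom_succ_succ, ih (by lia), ih (by lia), mul_zero, add_zero]

theorem one_sub_pow_mul_gaussBinom_succ (n k : ℕ) :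
    (1 - q ^ (k + 1)) * gaussBinom q n (k + 1) = (1 - q ^ (n - k)) * gaussBinom q n k := by
  induction n generalizing k with
  | zero => simp [gaussBinom]
  | succ n ih =>
    rcases lt_or_ge n k with hk | hk
    · rw [gaussBinom_eq_zero_of_lt q (by lia), Nat.sub_eq_zero_of_le hk]
      ring
    obtain ⟨m, rfl⟩ := Nat.exists_eq_add_of_le hk
    cases k with
    | zero =>
      have h := ih 0
      simp only [zero_add, tsub_zero, gaussBinom_zero_right] at h ⊢
      rw [← zero_add 1, gaussBinom_succ_succ, gaussBinom_zero_right]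
      linear_combination q * h
    | succ k =>
      have h₁ := ih (k + 1)
      have h₂ := ih k
      rw [gaussBinom_succ_succ, gaussBinom_succ_succ]
      rw [show k + 1 + m - (k + 1) = m by lia] at h₁
      rw [show k + 1 + m - k = m + 1 by lia] at h₂
      rw [show k + 1 + m + 1 - (k + 1) = m + 1 by lia]
      linear_combination q ^ (k + 2) * h₁ + h₂

theorem gaussBinom_succ_succ' (n k : ℕ) :
    gaussBinom q (n + 1) (k + 1) = gaussBinom q n (k + 1) + q ^ (n - k) * gaussBinom q n k := by
  linear_combination gaussBinom_succ_succ q n k - one_sub_pow_mul_gaussBinom_succ q n k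

theorem gaussBinom_mul_qPochhammer_mul_qPochhammer {n k : ℕ} (hk : k ≤ n) :
    gaussBinom q n k * (qPochhammer q k * qPochhammer q (n - k)) = qPochhammer q n := by
  induction k with
  | zero => simp [gaussBinom_zero_right, qPochhammer]
  | succ k ih =>
    obtain ⟨m, rfl⟩ := Nat.exists_eq_add_of_le hk
    have h_ratio := one_sub_pow_mul_gaussBinom_succ q (k + 1 + m) k
    rw [← ih (by lia), qPochhammer_succ]
    rw [show k + 1 + m - k = m + 1 by lia] at h_ratio ⊢
    rw [Nat.add_sub_cancel_left, qPochhammer_succ]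
    linear_combination qPochhammer q k * qPochhammer q m * h_ratio

theorem map_gaussBinom {S : Type*} [CommRing S] (f : R →+* S) (n k : ℕ) :
    f (gaussBinom q n k) = gaussBinom (f q) n k := by
  induction n generalizing k with
  | zero => cases k <;> simp [gaussBinom]
  | succ n ih => cases k <;> simp [gaussBinom, ih]

end GaussianBinomial

section FiniteTripleProduct

variable {R : Type*} [CommRing R]

theorem sub_mul_mul_sum_neg_pow {K : ℕ} {a b z : R} {A A' : ℕ → R} (h_zero : A' 0 = a * A 0)
    (h_succ : ∀ k, A' (k + 1) = a * A (k + 1) + b * A k) (h_top : A (K + 1) = 0) :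
    (a - b * z) * ∑ k ∈ Finset.range (K + 1), A k * (-z) ^ k =
      ∑ k ∈ Finset.range (K + 2), A' k * (-z) ^ k := by
  have h_shift : ∑ k ∈ Finset.range (K + 1), A k * (-z) ^ k =
      ∑ k ∈ Finset.range (K + 1), A (k + 1) * (-z) ^ (k + 1) + A 0 := by
    rw [← mul_one (A 0), ← pow_zero (-z), ← Finset.sum_range_succ' (fun k ↦ A k * (-z) ^ k),
      Finset.sum_range_succ _ (K + 1), h_top, zero_mul, add_zero]
  calc (a - b * z) * ∑ k ∈ Finset.range (K + 1), A k * (-z) ^ k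
      = a * (∑ k ∈ Finset.range (K + 1), A (k + 1) * (-z) ^ (k + 1) + A 0) +
          b * -z * ∑ k ∈ Finset.range (K + 1), A k * (-z) ^ k := by rw [← h_shift]; ring
    _ = ∑ k ∈ Finset.range (K + 1), (a * A (k + 1) + b * A k) * (-z) ^ (k + 1) + a * A 0 := by
      rw [mul_add, add_right_comm, Finset.mul_sum, Finset.mul_sum, ← Finset.sum_add_distrib]
      exact congrArg (· + _) (Finset.sum_congr rfl fun k _ ↦ by ring)
    _ = ∑ k ∈ Finset.range (K + 2), A' k * (-z) ^ k := by
      rw [Finset.sum_range_succ' _ (K + 1), h_zero, pow_zero, mul_one]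
      simp only [h_succ]

variable (q z : R)

theorem prod_pow_sub_eq_sum_gaussBinom (m : ℕ) :
    ∏ i ∈ Finset.range m, (q ^ (i + 1) - z) =
      ∑ k ∈ Finset.range (m + 1), q ^ triangular (k - m) * gaussBinom q m k * (-z) ^ k := by
  induction m with
  | zero => simp [triangular_zero, gaussBinom_zero_right]
  | succ m ih =>
    rw [Finset.prod_range_succ, ih, mul_comm]
    nth_rw 1 [← one_mul z]
    refine sub_mul_mul_sum_neg_pow ?_ (fun k ↦ ?_) ?_
    · have h_exponent : triangular (↑0 - ↑(m + 1)) = m + 1 + triangular (↑0 - m) := by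
        have h := natCast_triangular_add_one (-(m + 1))
        zify
        ring_nf at h ⊢
        linarith
      rw [Nat.cast_zero, h_exponent, gaussBinom_zero_right, gaussBinom_zero_right, pow_add]
      ring
    · have h_exponent := congrArg (q ^ ·) (triangular_natCast_succ_sub_add k m)
      simp only [pow_add] at h_exponent
      rw [gaussBinom_succ_succ, Nat.cast_succ, Nat.cast_succ m, add_sub_add_right_eq_sub]
      push_cast at h_exponent
      linear_combination -q * gaussBinom q m (k + 1) * h_exponent
    · rw [gaussBinom_eq_zero_of_lt q (by lia), mul_zero]

theorem prod_mul_prod_eq_sum_gaussBinom (m n : ℕ) :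
    (∏ i ∈ Finset.range m, (q ^ (i + 1) - z)) * ∏ i ∈ Finset.range n, (1 - q ^ i * z) =
      ∑ k ∈ Finset.range (m + n + 1),
        q ^ triangular (k - m) * gaussBinom q (m + n) k * (-z) ^ k := by
  induction n with
  | zero => simpa using prod_pow_sub_eq_sum_gaussBinom q z m
  | succ n ih =>
    rw [Finset.prod_range_succ, ← mul_assoc, ih, mul_comm]
    refine sub_mul_mul_sum_neg_pow ?_ (fun k ↦ ?_) ?_
    · rw [gaussBinom_zero_right, gaussBinom_zero_right, one_mul]
    · rw [← add_assoc, gaussBinom_succ_succ']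
      rcases lt_or_ge (m + n) k with hk | hk
      · rw [gaussBinom_eq_zero_of_lt q hk]
        ring
      have h_exponent : triangular (↑(k + 1) - m) + (m + n - k) = n + triangular (k - m) := by
        have := triangular_natCast_succ_sub_add k m
        lia
      rw [mul_add, ← mul_assoc, ← pow_add, h_exponent, pow_add]
      ring
    · rw [gaussBinom_eq_zero_of_lt q (by lia), mul_zero]

theorem one_sub_mul_prod_eq_sum_gaussBinom (n : ℕ) :
    (1 - z) * ∏ i ∈ Finset.range n, ((q ^ (i + 1) - z) * (1 - q ^ (i + 1) * z)) =
      ∑ k ∈ Finset.range (2 * n + 2),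
        q ^ triangular (k - n) * gaussBinom q (2 * n + 1) k * (-z) ^ k := by
  have h := prod_mul_prod_eq_sum_gaussBinom q z n (n + 1)
  rw [Finset.prod_range_succ', pow_zero, one_mul, ← mul_assoc, ← Finset.prod_mul_distrib,
    mul_comm] at h
  rwa [two_mul]

theorem sum_gaussBinom_mul_qPochhammer_sq (n : ℕ) :
    (∑ k ∈ Finset.range (2 * n + 2), q ^ triangular (k - n) * gaussBinom q (2 * n + 1) k) *
      qPochhammer q n ^ 2 = 2 * qPochhammer (q ^ 2) n ^ 2 := by
  have h := one_sub_mul_prod_eq_sum_gaussBinom q (-1) n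
  simp only [neg_neg, one_pow, mul_one] at h
  rw [← h, mul_assoc, qPochhammer, qPochhammer, ← Finset.prod_pow, ← Finset.prod_pow,
    ← Finset.prod_mul_distrib, sub_neg_eq_add, one_add_one_eq_two]
  exact congrArg (2 * ·) (Finset.prod_congr rfl fun i _ ↦ by ring)

theorem sum_neg_one_pow_mul_gaussBinom (n : ℕ) :
    ∑ k ∈ Finset.range (2 * n + 2),
      (-1) ^ k * (q ^ triangular (k - n) * gaussBinom q (2 * n + 1) k) = 0 := by
  have h := one_sub_mul_prod_eq_sum_gaussBinom q 1 n
  rw [sub_self, zero_mul] at h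
  simpa only [mul_comm] using h.symm

open Polynomial in
theorem sum_neg_one_pow_mul_natCast_mul_gaussBinom (n : ℕ) :
    ∑ k ∈ Finset.range (2 * n + 2),
      (-1) ^ k * k * (q ^ triangular (k - n) * gaussBinom q (2 * n + 1) k) =
        -(-1) ^ n * qPochhammer q n ^ 2 := by
  have h_derivative : ∏ i ∈ Finset.range n, (q ^ (i + 1) - 1) * (1 - q ^ (i + 1)) =
      ∑ k ∈ Finset.range (2 * n + 2),
        q ^ triangular (k - n) * gaussBinom q (2 * n + 1) k * (k * (-1) ^ (k - 1)) := by
    have h := congrArg (fun P : R[X] ↦ P.derivative.eval 1)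
      (one_sub_mul_prod_eq_sum_gaussBinom (C q) X n)
    simp only [← map_gaussBinom, ← C_pow, ← C_mul] at h
    simpa [derivative_mul, derivative_pow, eval_finsetSum, eval_prod] using h
  have h_prod : ∏ i ∈ Finset.range n, (q ^ (i + 1) - 1) * (1 - q ^ (i + 1)) =
      (-1) ^ n * qPochhammer q n ^ 2 := by
    nth_rw 2 [← Finset.card_range n]
    rw [qPochhammer, ← Finset.prod_pow, ← Finset.prod_const, ← Finset.prod_mul_distrib]
    exact Finset.prod_congr rfl fun i _ ↦ by ring
  rw [neg_mul, ← h_prod, h_derivative, ← Finset.sum_neg_distrib]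
  refine Finset.sum_congr rfl fun k _ ↦ ?_
  cases k with
  | zero => simp
  | succ k => rw [Nat.add_sub_cancel]; ring

theorem sum_negOnePow_mul_gaussBinom (n : ℕ) :
    ∑ k ∈ Finset.range (2 * n + 2), (((k - n : ℤ).negOnePow * (2 * (k - n) - 1) : ℤ) : R) *
      (q ^ triangular (k - n) * gaussBinom q (2 * n + 1) k) = -2 * qPochhammer q n ^ 2 := by
  have h_weight (k : ℕ) : (((k - n : ℤ).negOnePow * (2 * (k - n) - 1) : ℤ) : R) =
      (-1) ^ n * (2 * ((-1) ^ k * k) - (2 * n + 1) * (-1) ^ k) := by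
    rw [Int.negOnePow_sub]
    push_cast [Int.coe_negOnePow_natCast]
    ring
  have h_term (k : ℕ) (c : R) : (-1) ^ n * (2 * ((-1) ^ k * k) - (2 * n + 1) * (-1) ^ k) * c =
      2 * (-1) ^ n * ((-1) ^ k * k * c) - (-1) ^ n * (2 * n + 1) * ((-1) ^ k * c) := by ring
  simp only [h_weight, h_term, Finset.sum_sub_distrib, ← Finset.mul_sum,
    sum_neg_one_pow_mul_gaussBinom, sum_neg_one_pow_mul_natCast_mul_gaussBinom]
  have h_sq : ((-1) ^ n * (-1) ^ n : R) = 1 := by rw [← mul_pow]; simp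
  linear_combination -2 * qPochhammer q n ^ 2 * h_sq

end FiniteTripleProduct

section MonomialSeries

open Filter Topology PowerSeries
open scoped PowerSeries.WithPiTopology

variable {R ι κ : Type*} [CommRing R]

theorem coeff_monomial_mul_of_lt {d e : ℕ} (h : d < e) (c : R) (f : R⟦X⟧) :
    coeff d (monomial e c * f) = 0 := by
  rw [monomial_eq_C_mul_X_pow, mul_right_comm, coeff_mul_X_pow', if_neg h.not_ge]

theorem tendsto_prodMk_add_cofinite {e : ι → ℕ} {e' : κ → ℕ} (he : Tendsto e cofinite atTop)
    (he' : Tendsto e' cofinite atTop) :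
    Tendsto (fun x : ι × κ ↦ e x.1 + e' x.2) cofinite atTop := by
  rw [← coprod_cofinite, Filter.coprod, tendsto_sup]
  exact ⟨tendsto_atTop_mono (fun x ↦ Nat.le_add_right ..) (he.comp tendsto_comap),
    tendsto_atTop_mono (fun x ↦ Nat.le_add_left ..) (he'.comp tendsto_comap)⟩

variable [TopologicalSpace R]

theorem summable_monomial {e : ι → ℕ} (he : Tendsto e cofinite atTop) (c : ι → R) :
    Summable fun i ↦ monomial (e i) (c i) := by
  refine (WithPiTopology.summable_iff_summable_coeff _).mpr fun d ↦ summable_of_hasFiniteSupport ?_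
  refine (he.eventually_gt_atTop d).subset fun i hi hd ↦ hi ?_
  exact (coeff_monomial ..).trans (if_neg hd.ne)

variable [IsTopologicalRing R] [T2Space R]

theorem hasSum_monomial_mul_monomial {e : ι → ℕ} {e' : κ → ℕ} {c : ι → R} {c' : κ → R}
    {S S' : R⟦X⟧} (he : Tendsto e cofinite atTop) (he' : Tendsto e' cofinite atTop)
    (hS : HasSum (fun i ↦ monomial (e i) (c i)) S)
    (hS' : HasSum (fun i ↦ monomial (e' i) (c' i)) S') :
    HasSum (fun x : ι × κ ↦ monomial (e x.1 + e' x.2) (c x.1 * c' x.2)) (S * S') := by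
  have h_summable :
      Summable fun x : ι × κ ↦ monomial (e x.1) (c x.1) * monomial (e' x.2) (c' x.2) := by
    simp only [monomial_mul_monomial]
    exact summable_monomial (tendsto_prodMk_add_cofinite he he') _
  simpa only [monomial_mul_monomial] using hS.mul hS' h_summable

theorem tendsto_sum_monomial_mul {α : Type*} {l : Filter α} {e : ι → ℕ} {c : ι → R} {S w : R⟦X⟧}
    {s : α → Finset ι} {v : α → ι → R⟦X⟧} (he : Tendsto e cofinite atTop)
    (hS : HasSum (fun i ↦ monomial (e i) (c i)) S) (hs : Tendsto s l atTop)
    (hv : ∀ i, Tendsto (v · i) l (𝓝 w)) :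
    Tendsto (fun n ↦ ∑ i ∈ s n, monomial (e i) (c i) * v n i) l (𝓝 (S * w)) := by
  refine (WithPiTopology.tendsto_iff_coeff_tendsto ..).mpr fun d ↦ ?_
  have h_finite : {i | ¬ d < e i}.Finite := he.eventually_gt_atTop d
  have h_coeff_sum {t : Finset ι} (ht : h_finite.toFinset ≤ t) (f : ι → R⟦X⟧) :
      coeff d (∑ i ∈ t, monomial (e i) (c i) * f i) =
        coeff d (∑ i ∈ h_finite.toFinset, monomial (e i) (c i) * f i) := by
    simp only [map_sum]
    refine (Finset.sum_subset ht fun i _ hi ↦ coeff_monomial_mul_of_lt ?_ ..).symm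
    simpa using hi
  have h_limit : coeff d (S * w) =
      coeff d (∑ i ∈ h_finite.toFinset, monomial (e i) (c i) * w) := by
    refine tendsto_nhds_unique (((WithPiTopology.continuous_coeff R d).tendsto _).comp
      (hS.mul_right w)) (tendsto_nhds_of_eventually_eq ?_)
    filter_upwards [eventually_ge_atTop h_finite.toFinset] with t ht using h_coeff_sum ht _
  rw [h_limit]
  refine (((WithPiTopology.continuous_coeff R d).tendsto _).comp
    (tendsto_finsetSum _ fun i _ ↦ (hv i).const_mul _)).congr' ?_
  filter_upwards [hs.eventually_ge_atTop h_finite.toFinset] with n hn using (h_coeff_sum hn _).symm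

end MonomialSeries

section EulerProduct

open Filter Topology PowerSeries
open scoped PowerSeries.WithPiTopology

theorem tendsto_qPochhammer_J {b : ℕ} (hb : b ≠ 0) :
    Tendsto (qPochhammer ((X : ℤ⟦X⟧) ^ b)) atTop (𝓝 (J b)) := by
  refine (WithPiTopology.tendsto_iff_coeff_tendsto ..).mpr fun d ↦
    tendsto_nhds_of_eventually_eq ?_
  filter_upwards [eventually_ge_atTop (d + 1)] with n hn
  induction n, hn using Nat.le_induction with
  | base => simp only [J, qPochhammer, coeff_mk, pow_mul]
  | succ n hn ih =>
    have h_lt : ¬ b * (n + 1) ≤ d := by nlinarith [Nat.pos_of_ne_zero hb]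
    rw [qPochhammer_succ, mul_sub, mul_one, ← pow_mul, map_sub, coeff_mul_X_pow', if_neg h_lt,
      sub_zero, ih]

theorem tendsto_qPochhammer_J_one : Tendsto (qPochhammer (X : ℤ⟦X⟧)) atTop (𝓝 (J 1)) := by
  simpa only [pow_one] using tendsto_qPochhammer_J one_ne_zero

theorem isUnit_J {b : ℕ} (hb : b ≠ 0) : IsUnit (J b) := by
  simp [isUnit_iff_constantCoeff, J, hb]

theorem hasSum_J_one :
    HasSum (fun k : ℤ ↦ monomial (pentagonal k) (k.negOnePow : ℤ)) (J 1) := by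
  have h_tendsto : Tendsto (qPochhammer (X : ℤ⟦X⟧)) atTop (𝓝 (pentagonalSeries ℤ)) :=
    (WithPiTopology.hasProd_one_sub_X_pow ℤ).tendsto_prod_nat
  have h_eq : J 1 = pentagonalSeries ℤ :=
    tendsto_nhds_unique tendsto_qPochhammer_J_one h_tendsto
  simpa [h_eq, monomial_eq_C_mul_X_pow] using WithPiTopology.hasSum_pentagonalSeries ℤ

theorem tendsto_of_tendsto_mul_of_isUnit {α A : Type*} [CommRing A] [TopologicalSpace A]
    [IsTopologicalRing A] [IsLinearTopology A A] {l : Filter α} {g D : α → A} {a b : A}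
    (hb : IsUnit b) (hD : Tendsto D l (𝓝 b)) (hgD : Tendsto (fun x ↦ g x * D x) l (𝓝 (a * b))) :
    Tendsto g l (𝓝 a) := by
  obtain ⟨u, rfl⟩ := hb
  have h_error : Tendsto (fun x ↦ g x * (u - D x)) l (𝓝 0) :=
    IsLinearTopology.tendsto_mul_zero_of_right _ _ (by simpa using hD.const_sub (u : A))
  have h_mul_unit : Tendsto (fun x ↦ g x * u) l (𝓝 (a * u)) := by
    simpa only [← mul_add, add_sub_cancel, add_zero] using hgD.add h_error
  simpa only [Units.mul_inv_cancel_right] using h_mul_unit.mul_const (↑u⁻¹ : A)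

theorem tendsto_gaussBinom_mul_qPochhammer_sq (i : ℤ) :
    Tendsto (fun n : ℕ ↦ gaussBinom (X : ℤ⟦X⟧) (2 * n + 1) (n + i).toNat * qPochhammer X n ^ 2)
      atTop (𝓝 (J 1)) := by
  have h_left : Tendsto (fun n : ℕ ↦ (n + i).toNat) atTop atTop :=
    tendsto_atTop.mpr fun N ↦ (eventually_ge_atTop (N + i.natAbs)).mono fun n _ ↦ by lia
  have h_right : Tendsto (fun n : ℕ ↦ 2 * n + 1 - (n + i).toNat) atTop atTop :=
    tendsto_atTop.mpr fun N ↦ (eventually_ge_atTop (N + i.natAbs)).mono fun n _ ↦ by lia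
  have h_total : Tendsto (fun n : ℕ ↦ 2 * n + 1) atTop atTop :=
    tendsto_atTop.mpr fun N ↦ (eventually_ge_atTop N).mono fun n _ ↦ by lia
  refine tendsto_of_tendsto_mul_of_isUnit ((isUnit_J one_ne_zero).mul (isUnit_J one_ne_zero))
    ((tendsto_qPochhammer_J_one.comp h_left).mul (tendsto_qPochhammer_J_one.comp h_right)) ?_
  rw [← sq]
  refine ((tendsto_qPochhammer_J_one.comp h_total).mul
    (tendsto_qPochhammer_J_one.pow 2)).congr' ?_
  filter_upwards [eventually_ge_atTop i.natAbs] with n hn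
  have h_le : (n + i).toNat ≤ 2 * n + 1 := by lia
  simp only [Function.comp_apply, ← gaussBinom_mul_qPochhammer_mul_qPochhammer X h_le]
  ring

theorem sum_Icc_neg_eq_sum_range {M : Type*} [AddCommMonoid M] (f : ℤ → M) (n : ℕ) :
    ∑ i ∈ Finset.Icc (-n : ℤ) (n + 1), f i = ∑ k ∈ Finset.range (2 * n + 2), f (k - n) := by
  refine Finset.sum_nbij' (fun i ↦ (n + i).toNat) (fun k ↦ (k - n : ℤ)) ?_ ?_ ?_ ?_ ?_ <;>
    simp only [Finset.mem_Icc, Finset.mem_range] <;> intro i hi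
  pick_goal 5
  · congr 1
    lia
  all_goals lia

theorem tendsto_sum_gaussBinom {c : ℤ → ℤ} {S : ℤ⟦X⟧}
    (hS : HasSum (fun i ↦ monomial (triangular i) (c i)) S) :
    Tendsto (fun n : ℕ ↦ (∑ k ∈ Finset.range (2 * n + 2),
      (c (k - n) : ℤ⟦X⟧) * (X ^ triangular (k - n) * gaussBinom X (2 * n + 1) k)) *
        qPochhammer X n ^ 2) atTop (𝓝 (S * J 1)) := by
  have h_Icc : Tendsto (fun n : ℕ ↦ Finset.Icc (-n : ℤ) (n + 1)) atTop atTop :=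
    tendsto_atTop_finset_of_monotone
      (fun m n hmn ↦ Finset.Icc_subset_Icc (by lia) (by lia))
      fun i ↦ ⟨i.natAbs, Finset.mem_Icc.mpr (by lia)⟩
  refine (tendsto_sum_monomial_mul tendsto_triangular_cofinite hS h_Icc
    tendsto_gaussBinom_mul_qPochhammer_sq).congr fun n ↦ ?_
  rw [sum_Icc_neg_eq_sum_range, Finset.sum_mul]
  refine Finset.sum_congr rfl fun k _ ↦ ?_
  rw [add_sub_cancel, Int.toNat_natCast, monomial_eq_C_mul_X_pow]
  simp only [eq_intCast, mul_assoc]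

theorem mul_J_one_eq_of_hasSum_triangular {T : ℤ⟦X⟧}
    (hT : HasSum (fun i : ℤ ↦ monomial (triangular i) 1) T) :
    T * J 1 = 2 * J 2 ^ 2 := by
  refine tendsto_nhds_unique (tendsto_sum_gaussBinom hT) ?_
  simp only [Int.cast_one, one_mul, sum_gaussBinom_mul_qPochhammer_sq]
  exact ((tendsto_qPochhammer_J two_ne_zero).pow 2).const_mul 2

theorem mul_J_one_eq_of_hasSum_negOnePow_triangular {U : ℤ⟦X⟧}
    (hU : HasSum (fun i : ℤ ↦ monomial (triangular i) (i.negOnePow * (2 * i - 1) : ℤ)) U) :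
    U * J 1 = -2 * J 1 ^ 4 := by
  refine tendsto_nhds_unique (tendsto_sum_gaussBinom hU) ?_
  simp only [sum_negOnePow_mul_gaussBinom, mul_assoc, ← pow_add]
  exact (tendsto_qPochhammer_J_one.pow 4).const_mul (-2)

end EulerProduct

section LatticeSum

theorem add_self_eq_zero_of_hasSum_comp_eq_neg {ι M : Type*} [AddCommGroup M] [TopologicalSpace M]
    [IsTopologicalAddGroup M] [T2Space M] {f : ι → M} {S : M} (hf : HasSum f S) (σ : ι ≃ ι)
    (hσ : ∀ i, f (σ i) = -f i) : S + S = 0 := by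
  have h_comp : f ∘ σ = fun i ↦ -f i := funext hσ
  exact add_eq_zero_iff_eq_neg.mpr ((h_comp ▸ σ.hasSum_iff.mpr hf).unique hf.neg)

theorem injective_prodMk_two_mul_sub :
    Function.Injective fun x : ℤ × ℤ ↦ (x.1, 2 * x.2 - x.1) := fun ⟨k, m⟩ ⟨k', m'⟩ h ↦ by
  simp only [Prod.mk.injEq] at h ⊢
  lia

theorem injective_prodMk_one_sub_two_mul_sub :
    Function.Injective fun x : ℤ × ℤ ↦ (x.1, 1 - (2 * x.2 - x.1)) := fun ⟨k, m⟩ ⟨k', m'⟩ h ↦ by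
  simp only [Prod.mk.injEq] at h ⊢
  lia

theorem isCompl_range_prodMk_two_mul_sub :
    IsCompl (Set.range fun x : ℤ × ℤ ↦ (x.1, 2 * x.2 - x.1))
      (Set.range fun x : ℤ × ℤ ↦ (x.1, 1 - (2 * x.2 - x.1))) := by
  refine ⟨Set.disjoint_left.mpr ?_, codisjoint_iff.mpr ?_⟩
  · rintro _ ⟨⟨k, m⟩, rfl⟩ ⟨⟨k', m'⟩, h⟩
    simp only [Prod.mk.injEq] at h
    lia
  · refine Set.eq_univ_of_forall fun ⟨k, j⟩ ↦ ?_
    rcases Int.even_or_odd' (j + k) with ⟨m, hm | hm⟩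
    · exact .inl ⟨(k, m), Prod.ext rfl (by lia)⟩
    · exact .inr ⟨(k, k - m), Prod.ext rfl (by lia)⟩

theorem hasSum_add_self_of_hasSum_two_mul_sub {M : Type*} [AddCommMonoid M] [TopologicalSpace M]
    [ContinuousAdd M] {g : ℤ × ℤ → M} {S : M} (h_symm : ∀ k j, g (k, 1 - j) = g (k, j))
    (hS : HasSum (fun x : ℤ × ℤ ↦ g (x.1, 2 * x.2 - x.1)) S) : HasSum g (S + S) := by
  have h_odd : HasSum (g ∘ fun x : ℤ × ℤ ↦ (x.1, 1 - (2 * x.2 - x.1))) S := by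
    simpa only [Function.comp_def, h_symm] using hS
  exact (injective_prodMk_two_mul_sub.hasSum_range_iff.mpr hS).add_isCompl
    isCompl_range_prodMk_two_mul_sub
    (injective_prodMk_one_sub_two_mul_sub.hasSum_range_iff.mpr h_odd)

end LatticeSum

section QuinticIdentity

open Filter Topology PowerSeries
open scoped PowerSeries.WithPiTopology

theorem pentagonal_sub_add_triangular (k m : ℤ) :
    pentagonal (m - k) + triangular (2 * m - (m - k)) =
      pentagonal k + triangular (2 * m - k) := by
  zify
  linarith [two_mul_natCast_pentagonal k, two_mul_natCast_pentagonal (m - k),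
    two_mul_natCast_triangular (2 * m - k), two_mul_natCast_triangular (2 * m - (m - k))]

theorem negOnePow_mul_negOnePow_two_mul_sub (k m : ℤ) :
    (k.negOnePow * (2 * m - k).negOnePow : ℤ) = 1 := by
  rw [Int.negOnePow_sub, Int.negOnePow_two_mul, one_mul, ← Units.val_mul, Int.units_mul_self,
    Units.val_one]

theorem mul_add_J_one_mul_eq_zero_of_hasSum {F T U : ℤ⟦X⟧}
    (hF : HasSum (fun k : ℤ ↦ monomial (pentagonal k) (1 - 6 * k)) F)
    (hT : HasSum (fun j : ℤ ↦ monomial (triangular j) 1) T)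
    (hU : HasSum (fun j : ℤ ↦ monomial (triangular j) (j.negOnePow * (2 * j - 1) : ℤ)) U) :
    F * T + J 1 * U = 0 := by
  let g (x : ℤ × ℤ) : ℤ⟦X⟧ := monomial (pentagonal x.1 + triangular x.2)
    (1 - 6 * x.1 + x.1.negOnePow * (x.2.negOnePow * (2 * x.2 - 1)))
  have hg : HasSum g (F * T + J 1 * U) := by
    simpa only [g, map_add, mul_one] using
      (hasSum_monomial_mul_monomial tendsto_pentagonal_cofinite tendsto_triangular_cofinite
        hF hT).add (hasSum_monomial_mul_monomial tendsto_pentagonal_cofinite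
          tendsto_triangular_cofinite hasSum_J_one hU)
  have hg_symm (k j : ℤ) : g (k, 1 - j) = g (k, j) := by
    simp only [g, triangular_one_sub, Int.negOnePow_sub, Int.negOnePow_one]
    push_cast
    ring_nf
  have hg_even (k m : ℤ) : g (k, 2 * m - k) =
      monomial (pentagonal k + triangular (2 * m - k)) (4 * m - 8 * k) := by
    simp only [g, ← mul_assoc, negOnePow_mul_negOnePow_two_mul_sub]
    ring_nf
  have h_even := (hg.summable.comp_injective injective_prodMk_two_mul_sub).hasSum
  rw [hg.unique (hasSum_add_self_of_hasSum_two_mul_sub hg_symm h_even)]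
  let σ : ℤ × ℤ ≃ ℤ × ℤ := Function.Involutive.toPerm (fun x ↦ (x.2 - x.1, x.2)) fun x ↦ by simp
  refine add_self_eq_zero_of_hasSum_comp_eq_neg h_even σ fun ⟨k, m⟩ ↦ ?_
  change g (m - k, 2 * m - (m - k)) = -g (k, 2 * m - k)
  rw [hg_even, hg_even, pentagonal_sub_add_triangular, ← map_neg]
  ring_nf

theorem J_one_pow_five_eq_of_hasSum_pentagonal {F : ℤ⟦X⟧}
    (hF : HasSum (fun k : ℤ ↦ monomial (pentagonal k) (1 - 6 * k)) F) :
    J 1 ^ 5 = J 2 ^ 2 * F := by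
  have hT := (summable_monomial tendsto_triangular_cofinite fun _ ↦ (1 : ℤ)).hasSum
  have hU := (summable_monomial tendsto_triangular_cofinite
    fun j ↦ (j.negOnePow * (2 * j - 1) : ℤ)).hasSum
  have h_zero := mul_add_J_one_mul_eq_zero_of_hasSum hF hT hU
  have hT_eq := mul_J_one_eq_of_hasSum_triangular hT
  have hU_eq := mul_J_one_eq_of_hasSum_negOnePow_triangular hU
  have h_two : (2 : ℤ⟦X⟧) ≠ 0 := by
    simpa using C_injective.ne (two_ne_zero' ℤ)
  refine mul_left_cancel₀ h_two ?_
  linear_combination F * hT_eq + J 1 * hU_eq - J 1 * h_zero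

end QuinticIdentity

section Congruence

open Filter PowerSeries
open scoped PowerSeries.WithPiTopology

theorem dvd_of_hasSum {ι : Type*} {p S : ℤ} {f : ι → ℤ} (hf : HasSum f S) (h : ∀ i, p ∣ f i) :
    p ∣ S :=
  (isClosed_discrete {x | p ∣ x}).mem_of_tendsto hf
    (.of_forall fun _ ↦ Finset.dvd_sum fun i _ ↦ h i)

theorem dvd_coeff_of_hasSum_pentagonal {F : ℤ⟦X⟧}
    (hF : HasSum (fun k : ℤ ↦ monomial (pentagonal k) (1 - 6 * k)) F) {p : ℤ} (hp : Prime p)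
    {N : ℕ} (hN : p ∣ 24 * N + 1) : p ∣ coeff N F := by
  refine dvd_of_hasSum ((WithPiTopology.hasSum_iff_hasSum_coeff _).mp hF N) fun k ↦ ?_
  rw [coeff_monomial]
  split_ifs with hk
  · have h_sq : (24 * N + 1 : ℤ) = (1 - 6 * k) ^ 2 := by
      rw [hk]
      linear_combination 12 * two_mul_natCast_pentagonal k
    exact hp.dvd_of_dvd_pow (h_sq ▸ hN)
  · exact dvd_zero p

theorem dvd_coeff_pow_of_not_dvd {p : ℕ} (hp : p.Prime) (f : ℤ⟦X⟧) {n : ℕ} (hn : ¬ p ∣ n) :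
    (p : ℤ) ∣ coeff n (f ^ p) := by
  have : Fact p.Prime := ⟨hp⟩
  have h_frobenius :=
    MvPowerSeries.map_frobenius_expand p hp.ne_zero (f := f.map (Int.castRingHom (ZMod p)))
  rw [← ZMod.intCast_zmod_eq_zero_iff_dvd, ← eq_intCast (Int.castRingHom (ZMod p)), ← coeff_map,
    map_pow]
  refine (congrArg (coeff n) h_frobenius.symm).trans ?_
  exact (congrArg (frobenius (ZMod p) p)
    (coeff_expand_of_not_dvd p hp.ne_zero _ hn)).trans (map_zero _)

theorem dvd_coeff_pow_mul {p : ℕ} (hp : p.Prime) (g : ℤ⟦X⟧) {f : ℤ⟦X⟧} {N : ℕ}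
    (hf : ∀ n, n ≡ N [MOD p] → (p : ℤ) ∣ coeff n f) : (p : ℤ) ∣ coeff N (g ^ p * f) := by
  rw [coeff_mul]
  refine Finset.dvd_sum fun ⟨a, b⟩ hab ↦ ?_
  have hab : a + b = N := Finset.HasAntidiagonal.mem_antidiagonal.mp hab
  by_cases ha : p ∣ a
  · have hb : b ≡ N [MOD p] := by
      simpa [hab] using ((Nat.modEq_zero_iff_dvd.mpr ha).add_right b).symm
    exact (hf b hb).mul_left _
  · exact (dvd_coeff_pow_of_not_dvd hp g ha).mul_right _

theorem stmt3_general {d : ℕ → ℤ} {m p N : ℕ} (hp : p.Prime)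
    (hd : mk d * J 1 ^ (3 * m + 1) = J 2 ^ m) (hm : p ∣ m + 2) (hN : p ∣ 24 * N + 1) :
    (p : ℤ) ∣ d N := by
  obtain ⟨t, ht⟩ := hm
  obtain ⟨u, hu⟩ := isUnit_J one_ne_zero
  obtain ⟨F, hF⟩ := summable_monomial tendsto_pentagonal_cofinite fun k : ℤ ↦ 1 - 6 * k
  have h_mul : mk d * (J 1 ^ (3 * t)) ^ p = (J 2 ^ t) ^ p * F := by
    calc mk d * (J 1 ^ (3 * t)) ^ p = mk d * J 1 ^ (3 * m + 1) * J 1 ^ 5 := by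
          rw [← pow_mul, mul_assoc 3, mul_comm t, ← ht]
          ring
      _ = (J 2 ^ t) ^ p * F := by
          rw [hd, J_one_pow_five_eq_of_hasSum_pentagonal hF, ← mul_assoc, ← pow_add, ht, mul_comm p,
            pow_mul]
  have h_eq : mk d = (J 2 ^ t * ↑(u⁻¹ ^ (3 * t))) ^ p * F := by
    rw [mul_pow, mul_right_comm, ← h_mul, mul_assoc, ← mul_pow, ← hu, ← Units.val_pow_eq_pow_val,
      ← Units.val_mul, ← mul_pow, mul_inv_cancel, one_pow, Units.val_one, one_pow, mul_one]
  rw [← coeff_mk N d, h_eq]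
  refine dvd_coeff_pow_mul hp _ fun n hn ↦ ?_
  refine dvd_coeff_of_hasSum_pentagonal hF (Nat.prime_iff_prime_int.mp hp) ?_
  exact_mod_cast (((hn.mul_left 24).add_right 1).dvd_iff dvd_rfl).mpr hN

end Congruence

/-- for all k ≥ 0 and n ≥ 0, `d_{7k+5}(7n + 2) ≡ 0 (mod 7)`, where for each `k`
`d_k` is defined by `∑ d_k(n) qⁿ = J_2^k / J_1^{3k+1}`. -/
theorem stmt3 (d : ℕ → ℕ → ℤ)
    (hd : ∀ k : ℕ, PowerSeries.mk (d k) * (J 1) ^ (3 * k + 1) = (J 2) ^ k)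
    (k : ℕ) (n : ℕ) :
    (7 : ℤ) ∣ d (7 * k + 5) (7 * n + 2) := by
  exact stmt3_general (p := 7) (by norm_num) (hd _) (by lia) (by lia)
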